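/- Let P be the transition matrix of an irreducible Markov chain on a finite state space S with stationary distribution π, and let A ⊆ S be nonempty. Let P_A be the transition matrix of the induced chain on A, defined by P_A(x,y) = P_x(Z_{τ_A^+} = y) for x,y ∈ A, where τ_A^+ is the first return time to A. Then the stationary distribution of P_A is π restricted to A and normalized, i.e. π_A(x) = π(x)/π(A) for x ∈ A. -/

import Mathlib

/-!
Write `Q` for the matrix `P` killed on landing in `A`, `μ = π 1_A` and `ρ = π 1_{Aᶜ}`. Stationarity
of `π` off `A` says `ρ = μ Q + ρ Q`, hence `ρ Qⁿ = μ Qⁿ⁺¹ + ρ Qⁿ⁺¹` for all `n` (`rest_step`), and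
telescoping gives `π = ∑_{t ≤ n} μ Qᵗ + ρ Qⁿ`; applying `P` yields
`π = ∑_{t ≤ n} μ Qᵗ P + ρ Qⁿ P`. The remainder `ρ Qⁿ` is nonnegative and decreasing in `n`, so it
converges to some `r ≥ 0` with `r Q = r`. Comparing total masses, `r` charges no state from which
`A` is entered in one step, so `r` is `P`-invariant and vanishes on `A`; irreducibility forces
`r = 0` (`eq_zero_of_killed_invariant`). Thus `∑ₜ μ Qᵗ P = π`, which on `A` is the unnormalized
form of the claim.
-/

open Finset

/-- `t`-step transition probabilities of the chain with transition matrix `P`. -/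
def matPow {S : Type*} [Fintype S] [DecidableEq S] (P : S → S → ℝ) : ℕ → S → S → ℝ
  | 0 => fun x y => if x = y then 1 else 0
  | t + 1 => fun x y => ∑ z, matPow P t x z * P z y

/-- Transition matrix killed upon landing in `A`. -/
def killed {S : Type*} [DecidableEq S] (P : S → S → ℝ) (A : Finset S) (x y : S) : ℝ :=
  if y ∈ A then 0 else P x y

/-- Transition matrix of the chain induced on `A`:
`inducedMatrix P A x y = P_x(Z_{τ_A^+} = y)`, the probability that the first return
to `A` happens at `y`, computed by summing over the number of intermediate steps
spent outside `A`. -/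
noncomputable def inducedMatrix {S : Type*} [Fintype S] [DecidableEq S]
    (P : S → S → ℝ) (A : Finset S) (x y : S) : ℝ :=
  ∑' t : ℕ, ∑ z, matPow (killed P A) t x z * P z y

open Filter Topology

/-- The row vector `v Mᵗ`. -/
def vecPow {S : Type*} [Fintype S] [DecidableEq S] (M : S → S → ℝ) (v : S → ℝ) (t : ℕ)
    (z : S) : ℝ := ∑ x, v x * matPow M t x z

lemma killed_nonneg {S : Type*} [DecidableEq S] {P : S → S → ℝ} (hP0 : ∀ x y, 0 ≤ P x y)
    (A : Finset S) (x y : S) : 0 ≤ killed P A x y := by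
  unfold killed; split_ifs <;> simp [hP0]

section
variable {S : Type*} [Fintype S] [DecidableEq S]

lemma vecPow_zero (M : S → S → ℝ) (v : S → ℝ) (z : S) : vecPow M v 0 z = v z := by
  simp [vecPow, matPow]

/-- Associativity `(v Mᵗ) f = v (Mᵗ f)`; the column `f` is a column of `M` in `vecPow_succ` and a
column of `P` in `hasSum_first_return`. -/
lemma sum_vecPow_mul (M : S → S → ℝ) (v : S → ℝ) (t : ℕ) (f : S → ℝ) :
    ∑ w, vecPow M v t w * f w = ∑ x, v x * ∑ w, matPow M t x w * f w := by
  simp only [vecPow, sum_mul, mul_sum]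
  rw [sum_comm]
  simp only [mul_assoc]

lemma vecPow_succ (M : S → S → ℝ) (v : S → ℝ) (t : ℕ) (z : S) :
    vecPow M v (t + 1) z = ∑ w, vecPow M v t w * M w z := by
  rw [sum_vecPow_mul]; rfl

lemma matPow_nonneg {M : S → S → ℝ} (hM : ∀ x y, 0 ≤ M x y) (t : ℕ) (x y : S) :
    0 ≤ matPow M t x y := by
  induction t generalizing y with
  | zero => simp only [matPow]; split_ifs <;> norm_num
  | succ t ih => exact sum_nonneg fun z _ => mul_nonneg (ih z) (hM z y)

lemma vecPow_nonneg {M : S → S → ℝ} (hM : ∀ x y, 0 ≤ M x y) {v : S → ℝ} (hv : ∀ x, 0 ≤ v x)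
    (t : ℕ) (z : S) : 0 ≤ vecPow M v t z :=
  sum_nonneg fun x _ => mul_nonneg (hv x) (matPow_nonneg hM t x z)

lemma vecPow_of_invariant {M : S → S → ℝ} {r : S → ℝ} (hr : ∀ z, ∑ x, r x * M x z = r z)
    (t : ℕ) (z : S) : vecPow M r t z = r z := by
  induction t generalizing z with
  | zero => exact vecPow_zero M r z
  | succ t ih => rw [vecPow_succ]; simp only [ih, hr]

/-- The killed chain of an irreducible chain has no nonzero nonnegative invariant vector: such a
vector loses no mass to `A`, so it would be `P`-invariant although it vanishes on `A`. -/
lemma eq_zero_of_killed_invariant {P : S → S → ℝ} {A : Finset S}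
    (hP0 : ∀ x y, 0 ≤ P x y) (hP1 : ∀ x, ∑ y, P x y = 1)
    (hirr : ∀ x y, ∃ t : ℕ, 0 < matPow P t x y) (hA : A.Nonempty)
    {r : S → ℝ} (hr0 : ∀ x, 0 ≤ r x) (hr : ∀ z, ∑ x, r x * killed P A x z = r z) (x : S) :
    r x = 0 := by
  have hrA : ∀ z ∈ A, r z = 0 := fun z hz => by rw [← hr z]; simp [killed, hz]
  have hle : ∀ z, r z ≤ ∑ x, r x * P x z := fun z => by
    by_cases hz : z ∈ A
    · rw [hrA z hz]; exact sum_nonneg fun x _ => mul_nonneg (hr0 x) (hP0 x z)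
    · rw [← hr z]; simp [killed, hz]
  have hmass : ∑ z, ∑ x, r x * P x z = ∑ z, r z := by
    rw [sum_comm]; simp only [← mul_sum, hP1, mul_one]
  have hinv : ∀ z, ∑ x, r x * P x z = r z := fun z =>
    ((sum_eq_sum_iff_of_le fun z _ => hle z).1 hmass.symm z (mem_univ z)).symm
  obtain ⟨a, ha⟩ := hA
  obtain ⟨t, ht⟩ := hirr x a
  have h0 : ∑ x, r x * matPow P t x a = 0 := by
    rw [← hrA a ha]; exact vecPow_of_invariant hinv t a
  have hx := (sum_eq_zero_iff_of_nonneg fun x _ =>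
    mul_nonneg (hr0 x) (matPow_nonneg hP0 t x a)).1 h0 x (mem_univ x)
  exact (mul_eq_zero.1 hx).resolve_right ht.ne'

/-- `ρ Qⁿ = μ Qⁿ⁺¹ + ρ Qⁿ⁺¹`, where `μ` and `ρ` are the restrictions of `π` to `A` and `Aᶜ`. -/
lemma rest_step {P : S → S → ℝ} {π : S → ℝ} (A : Finset S)
    (hstat : ∀ y, ∑ x, π x * P x y = π y) (n : ℕ) (z : S) :
    vecPow (killed P A) (fun x => if x ∈ A then 0 else π x) n z =
      vecPow (killed P A) (fun x => if x ∈ A then π x else 0) (n + 1) z +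
      vecPow (killed P A) (fun x => if x ∈ A then 0 else π x) (n + 1) z := by
  induction n generalizing z with
  | zero =>
    simp only [vecPow_succ, vecPow_zero, ← sum_add_distrib, ← add_mul]
    have h : ∀ x, ((if x ∈ A then π x else 0) + if x ∈ A then 0 else π x) = π x := fun x => by
      split_ifs <;> simp
    simp only [h]
    by_cases hz : z ∈ A
    · simp [killed, hz]
    · simp [killed, hz, hstat]
  | succ n ih =>
    rw [vecPow_succ, vecPow_succ _ _ (n + 1), vecPow_succ _ _ (n + 1), ← sum_add_distrib]
    simp only [← add_mul, ← ih]

lemma tendsto_rest {P : S → S → ℝ} {π : S → ℝ} {A : Finset S}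
    (hP0 : ∀ x y, 0 ≤ P x y) (hP1 : ∀ x, ∑ y, P x y = 1)
    (hirr : ∀ x y, ∃ t : ℕ, 0 < matPow P t x y) (hπ0 : ∀ x, 0 ≤ π x)
    (hstat : ∀ y, ∑ x, π x * P x y = π y) (hA : A.Nonempty) (z : S) :
    Tendsto (fun n => vecPow (killed P A) (fun x => if x ∈ A then 0 else π x) n z)
      atTop (𝓝 0) := by
  set ρ : S → ℝ := fun x => if x ∈ A then 0 else π x with hρ
  have hρ0 : ∀ x, 0 ≤ ρ x := fun x => by simp only [hρ]; split_ifs <;> simp [hπ0]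
  have hQ := killed_nonneg hP0 A
  have hanti : ∀ z, Antitone fun n => vecPow (killed P A) ρ n z := fun z =>
    antitone_nat_of_succ_le fun n => by
      rw [rest_step A hstat n z]
      refine le_add_of_nonneg_left (vecPow_nonneg hQ (fun x => ?_) _ _)
      split_ifs <;> simp [hπ0]
  have hlim : ∀ z, ∃ l, Tendsto (fun n => vecPow (killed P A) ρ n z) atTop (𝓝 l) := fun z =>
    ⟨_, tendsto_atTop_ciInf (hanti z)
      ⟨0, by rintro _ ⟨n, rfl⟩; exact vecPow_nonneg hQ hρ0 n z⟩⟩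
  choose r hr using hlim
  have hr0 : ∀ z, 0 ≤ r z := fun z =>
    ge_of_tendsto' (hr z) fun n => vecPow_nonneg hQ hρ0 n z
  have hinv : ∀ z, ∑ x, r x * killed P A x z = r z := fun z => by
    have h1 : Tendsto (fun n => vecPow (killed P A) ρ (n + 1) z) atTop
        (𝓝 (∑ x, r x * killed P A x z)) := by
      simp only [vecPow_succ]
      exact tendsto_finsetSum _ fun x _ => (hr x).mul_const _
    exact tendsto_nhds_unique h1 ((tendsto_add_atTop_iff_nat 1).2 (hr z))
  rw [← eq_zero_of_killed_invariant hP0 hP1 hirr hA hr0 hinv z]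
  exact hr z

lemma sum_vecPow_add_rest {P : S → S → ℝ} {π : S → ℝ} (A : Finset S)
    (hstat : ∀ y, ∑ x, π x * P x y = π y) (n : ℕ) (z : S) :
    ∑ t ∈ range (n + 1), vecPow (killed P A) (fun x => if x ∈ A then π x else 0) t z +
      vecPow (killed P A) (fun x => if x ∈ A then 0 else π x) n z = π z := by
  induction n with
  | zero => simp only [zero_add, sum_range_one, vecPow_zero]; split_ifs <;> simp
  | succ n ih => rw [sum_range_succ, add_assoc, ← rest_step A hstat, ih]

/-- `∑ₜ μ Qᵗ P = π`, with `μ` the restriction of `π` to `A`. -/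
lemma hasSum_first_return {P : S → S → ℝ} {π : S → ℝ} {A : Finset S}
    (hP0 : ∀ x y, 0 ≤ P x y) (hP1 : ∀ x, ∑ y, P x y = 1)
    (hirr : ∀ x y, ∃ t : ℕ, 0 < matPow P t x y) (hπ0 : ∀ x, 0 ≤ π x)
    (hstat : ∀ y, ∑ x, π x * P x y = π y) (hA : A.Nonempty) (y : S) :
    HasSum (fun t => ∑ x ∈ A, π x * ∑ z, matPow (killed P A) t x z * P z y) (π y) := by
  have hμ : ∀ z, HasSum
      (fun t => vecPow (killed P A) (fun x => if x ∈ A then π x else 0) t z) (π z) := fun z => by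
    rw [hasSum_iff_tendsto_nat_of_nonneg, ← tendsto_add_atTop_iff_nat 1]
    · have h := (tendsto_rest hP0 hP1 hirr hπ0 hstat hA z).const_sub (π z)
      rw [sub_zero] at h
      refine h.congr fun n => ?_
      rw [← sum_vecPow_add_rest A hstat n z, add_sub_cancel_right]
    · refine fun t => vecPow_nonneg (killed_nonneg hP0 A) (fun x => ?_) t z
      split_ifs <;> simp [hπ0]
  have h := hasSum_sum fun z (_ : z ∈ univ) => (hμ z).mul_right (P z y)
  rw [hstat] at h
  simpa only [sum_vecPow_mul, ite_mul, zero_mul, sum_ite_mem, univ_inter] using h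

end

/-- for an irreducible finite Markov chain `P` with stationary
distribution `π` and a nonempty set `A`, the measure `π` restricted to `A` and
normalized is a stationary distribution of the induced chain on `A`. -/
theorem induced_chain_stationary_distribution
    {S : Type*} [Fintype S] [DecidableEq S]
    (P : S → S → ℝ) (π : S → ℝ) (A : Finset S)
    (hP0 : ∀ x y, 0 ≤ P x y) (hP1 : ∀ x, ∑ y, P x y = 1)
    (hirr : ∀ x y, ∃ t : ℕ, 0 < matPow P t x y)
    (hπ0 : ∀ x, 0 ≤ π x) (hπ1 : ∑ x, π x = 1)
    (hstat : ∀ y, ∑ x, π x * P x y = π y)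
    (hA : A.Nonempty) :
    ∀ y ∈ A, ∑ x ∈ A, (π x / ∑ a ∈ A, π a) * inducedMatrix P A x y
      = π y / ∑ a ∈ A, π a := by
  intro y _
  have h := hasSum_first_return hP0 hP1 hirr hπ0 hstat hA y
  have hnn : ∀ x t, 0 ≤ π x * ∑ z, matPow (killed P A) t x z * P z y := fun x t =>
    mul_nonneg (hπ0 x) (sum_nonneg fun z _ =>
      mul_nonneg (matPow_nonneg (killed_nonneg hP0 A) t x z) (hP0 z y))
  have hs : ∀ x ∈ A, Summable fun t => π x * ∑ z, matPow (killed P A) t x z * P z y :=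
    fun x hx => h.summable.of_nonneg_of_le (hnn x) fun t =>
      single_le_sum (f := fun x => π x * ∑ z, matPow (killed P A) t x z * P z y)
        (fun x _ => hnn x t) hx
  simp only [div_mul_eq_mul_div, ← sum_div]
  congr 1
  rw [← h.tsum_eq, Summable.tsum_finsetSum hs]
  -- `tsum_mul_left` needs no summability over a field, so `π x > 0` is not required here.
  exact sum_congr rfl fun x _ => tsum_mul_left.symm
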